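/- arXiv:2503.08297 — 6 statements merged into one kernel-verified Lean document; each statement's English description precedes it below -/
import Mathlib

section
/- For every ε > 0 and every v ∈ [0,1], if X is a real random variable whose law has density ρ of the SW mechanism with input v, then E[(X − q/2 − q·b)/(2b(p−q))] = v; that is, the unbiased SW estimator A_usw(v) = (A_sw(v) − q/2 − qb)/(2b(p−q)) is an unbiased estimator of v. -/
open Real MeasureTheory

/-!
The law of the mechanism is `p` times Lebesgue measure on the window `[v - b, v + b]` plus `q` times
Lebesgue measure on the rest of `[-b, 1 + b]`. As the window is centred at `v` and the outer
interval at `1 / 2`, the law has mass `2bp + q` and mean `q / 2 + qb + 2b(p - q)v`. The mean is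
affine in `v`, and the estimator applies the inverse affine map to `X`.
-/

theorem withDensity_ite_mem_ite_mem {α : Type*} [MeasurableSpace α] (μ : Measure α) {s t : Set α}
    [DecidablePred (· ∈ s)] [DecidablePred (· ∈ t)] (hs : MeasurableSet s) (ht : MeasurableSet t)
    (a c : ENNReal) :
    μ.withDensity (fun x => if x ∈ t then a else if x ∈ s then c else 0) =
      a • μ.restrict t + c • μ.restrict (s \ t) := by
  have hdensity : (fun x => if x ∈ t then a else if x ∈ s then c else 0) =
      t.indicator (fun _ => a) + (s \ t).indicator (fun _ => c) := by
    ext x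
    by_cases hxt : x ∈ t <;> by_cases hxs : x ∈ s <;> simp [hxt, hxs]
  rw [hdensity, withDensity_add_left (measurable_const.indicator ht), withDensity_indicator ht,
    withDensity_indicator (hs.diff ht), withDensity_const, withDensity_const]

theorem setIntegral_Icc_id {a c : ℝ} (hac : a ≤ c) :
    ∫ x in Set.Icc a c, x = (c ^ 2 - a ^ 2) / 2 := by
  rw [integral_Icc_eq_integral_Ioc, ← intervalIntegral.integral_of_le hac, integral_id]

/-- The output law of the Square Wave mechanism with input `v`, for an arbitrary half-width `b` and
arbitrary density levels `p` (on the window around `v`) and `q` (elsewhere). It is a probability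
measure only if the levels are normalised, and negative levels are truncated to `0`. -/
noncomputable def swMeasure (b p q v : ℝ) : Measure ℝ :=
  volume.withDensity fun x => ENNReal.ofReal
    (if x ∈ Set.Icc (v - b) (v + b) then p else if x ∈ Set.Icc (-b) (1 + b) then q else 0)

section swMeasure

variable {b p q v : ℝ}

theorem swMeasure_eq_add (b p q v : ℝ) :
    swMeasure b p q v =
      ENNReal.ofReal p • volume.restrict (Set.Icc (v - b) (v + b)) +
        ENNReal.ofReal q •
          volume.restrict (Set.Icc (-b) (1 + b) \ Set.Icc (v - b) (v + b)) := by
  simp only [swMeasure, apply_ite ENNReal.ofReal, ENNReal.ofReal_zero]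
  exact withDensity_ite_mem_ite_mem volume measurableSet_Icc measurableSet_Icc _ _

theorem swWindow_subset (b : ℝ) (hv : v ∈ Set.Icc (0 : ℝ) 1) :
    Set.Icc (v - b) (v + b) ⊆ Set.Icc (-b) (1 + b) :=
  Set.Icc_subset_Icc (by linarith [hv.1]) (by linarith [hv.2])

section Integral

variable {E : Type*} [NormedAddCommGroup E] {g : ℝ → E}

theorem integrable_swMeasure (p q : ℝ) (hv : v ∈ Set.Icc (0 : ℝ) 1)
    (hg : IntegrableOn g (Set.Icc (-b) (1 + b))) : Integrable g (swMeasure b p q v) := by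
  rw [swMeasure_eq_add]
  exact ((hg.mono_set (swWindow_subset b hv)).smul_measure ENNReal.ofReal_ne_top).add_measure
    ((hg.mono_set Set.sdiff_subset).smul_measure ENNReal.ofReal_ne_top)

theorem integral_swMeasure [NormedSpace ℝ E] (hp : 0 ≤ p) (hq : 0 ≤ q)
    (hv : v ∈ Set.Icc (0 : ℝ) 1) (hg : IntegrableOn g (Set.Icc (-b) (1 + b))) :
    ∫ x, g x ∂swMeasure b p q v =
      p • (∫ x in Set.Icc (v - b) (v + b), g x) +
        q • ((∫ x in Set.Icc (-b) (1 + b), g x) - ∫ x in Set.Icc (v - b) (v + b), g x) := by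
  have hwindow := hg.mono_set (swWindow_subset b hv)
  have hrest := hg.mono_set (Set.sdiff_subset (t := Set.Icc (v - b) (v + b)))
  rw [swMeasure_eq_add, integral_add_measure (hwindow.smul_measure ENNReal.ofReal_ne_top)
      (hrest.smul_measure ENNReal.ofReal_ne_top), integral_smul_measure, integral_smul_measure,
    ENNReal.toReal_ofReal hp, ENNReal.toReal_ofReal hq,
    setIntegral_sdiff measurableSet_Icc hg (swWindow_subset b hv)]

end Integral

theorem measureReal_univ_swMeasure (hb : 0 ≤ b) (hp : 0 ≤ p) (hq : 0 ≤ q)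
    (hv : v ∈ Set.Icc (0 : ℝ) 1) : (swMeasure b p q v).real Set.univ = 2 * b * p + q := by
  have hvolume : ∀ {a c : ℝ}, a ≤ c → ∫ _ in Set.Icc a c, (1 : ℝ) = c - a := fun hac => by
    rw [setIntegral_const, Real.volume_real_Icc_of_le hac, smul_eq_mul, mul_one]
  calc (swMeasure b p q v).real Set.univ
      = ∫ _, (1 : ℝ) ∂swMeasure b p q v := by rw [integral_const, smul_eq_mul, mul_one]
    _ = 2 * b * p + q := by
      rw [integral_swMeasure hp hq hv continuousOn_const.integrableOn_Icc,
        hvolume (by linarith), hvolume (by linarith), smul_eq_mul, smul_eq_mul]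
      ring

theorem isProbabilityMeasure_swMeasure (hb : 0 ≤ b) (hp : 0 ≤ p) (hq : 0 ≤ q)
    (hmass : 2 * b * p + q = 1) (hv : v ∈ Set.Icc (0 : ℝ) 1) :
    IsProbabilityMeasure (swMeasure b p q v) :=
  ⟨ENNReal.toReal_eq_one_iff _ |>.mp <|
    (measureReal_univ_swMeasure hb hp hq hv).trans hmass⟩

theorem integrable_id_swMeasure (b p q : ℝ) (hv : v ∈ Set.Icc (0 : ℝ) 1) :
    Integrable (fun x => x) (swMeasure b p q v) :=
  integrable_swMeasure p q hv continuousOn_id.integrableOn_Icc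

theorem integral_id_swMeasure (hb : 0 ≤ b) (hp : 0 ≤ p) (hq : 0 ≤ q)
    (hv : v ∈ Set.Icc (0 : ℝ) 1) :
    ∫ x, x ∂swMeasure b p q v = q / 2 + q * b + 2 * b * (p - q) * v := by
  rw [integral_swMeasure hp hq hv (g := fun x => x) continuousOn_id.integrableOn_Icc,
    setIntegral_Icc_id (by linarith), setIntegral_Icc_id (by linarith), smul_eq_mul, smul_eq_mul]
  ring

end swMeasure

theorem sw_unbiased_estimator_general {Ω : Type*} [MeasurableSpace Ω] {μ : Measure Ω} {X : Ω → ℝ}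
    {b p q v : ℝ} (hb : 0 < b) (hp : 0 ≤ p) (hq : 0 ≤ q) (hpq : p ≠ q)
    (hmass : 2 * b * p + q = 1) (hv : v ∈ Set.Icc (0 : ℝ) 1)
    (hX : μ.map X = swMeasure b p q v) :
    ∫ ω, (X ω - q / 2 - q * b) / (2 * b * (p - q)) ∂μ = v := by
  have hprob : IsProbabilityMeasure (swMeasure b p q v) :=
    isProbabilityMeasure_swMeasure hb.le hp hq hmass hv
  have hXm : AEMeasurable X μ :=
    aemeasurable_of_map_neZero (by rw [hX]; infer_instance)
  have hscale : 2 * b * (p - q) ≠ 0 := mul_ne_zero (by positivity) (sub_ne_zero.mpr hpq)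
  calc ∫ ω, (X ω - q / 2 - q * b) / (2 * b * (p - q)) ∂μ
      = ∫ x, (x - q / 2 - q * b) / (2 * b * (p - q)) ∂swMeasure b p q v := by
        rw [← hX, integral_map hXm (by fun_prop)]
    _ = ((∫ x, x ∂swMeasure b p q v) - (q / 2 + q * b)) / (2 * b * (p - q)) := by
        simp only [sub_sub]
        rw [integral_div, integral_sub (integrable_id_swMeasure b p q hv) (integrable_const _),
          integral_const, probReal_univ, one_smul]
    _ = v := by
        rw [integral_id_swMeasure hb.le hp hq hv, add_sub_cancel_left,
          mul_div_cancel_left₀ v hscale]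

/-- The half-width `b` of the Square Wave mechanism with privacy parameter `ε`. -/
noncomputable def swHalfWidth (ε : ℝ) : ℝ :=
  (ε * exp ε - exp ε + 1) / (2 * exp ε * (exp ε - ε - 1))

/-- The density level `p` on the window, for an arbitrary half-width `b`. -/
noncomputable def swHigh (ε b : ℝ) : ℝ := exp ε / (2 * b * exp ε + 1)

/-- The density level `q` off the window, for an arbitrary half-width `b`. -/
noncomputable def swLow (ε b : ℝ) : ℝ := 1 / (2 * b * exp ε + 1)

theorem swHalfWidth_pos {ε : ℝ} (hε : ε ≠ 0) : 0 < swHalfWidth ε := by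
  have hden : 0 < exp ε - ε - 1 := by linarith [add_one_lt_exp hε]
  have hnum : 0 < ε * exp ε - exp ε + 1 := by
    -- The numerator is `exp ε * (exp (-ε) - (-ε + 1))`.
    have hmul := mul_lt_mul_of_pos_right (add_one_lt_exp (neg_ne_zero.mpr hε)) (exp_pos ε)
    rw [← exp_add, neg_add_cancel, exp_zero] at hmul
    linarith
  unfold swHalfWidth
  positivity

theorem swHigh_nonneg (ε : ℝ) {b : ℝ} (hb : 0 ≤ b) : 0 ≤ swHigh ε b := by
  unfold swHigh
  positivity

theorem swLow_nonneg (ε : ℝ) {b : ℝ} (hb : 0 ≤ b) : 0 ≤ swLow ε b := by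
  unfold swLow
  positivity

theorem swHigh_ne_swLow {ε b : ℝ} (hε : ε ≠ 0) (hb : 0 ≤ b) : swHigh ε b ≠ swLow ε b := by
  have hden : 2 * b * exp ε + 1 ≠ 0 := by positivity
  rw [swHigh, swLow, Ne, div_left_inj' hden, exp_eq_one_iff]
  exact hε

theorem two_mul_mul_swHigh_add_swLow (ε : ℝ) {b : ℝ} (hb : 0 ≤ b) :
    2 * b * swHigh ε b + swLow ε b = 1 := by
  have hden : 2 * b * exp ε + 1 ≠ 0 := by positivity
  rw [swHigh, swLow, ← mul_div_assoc, ← add_div, div_self hden]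

/-- The unbiased SW estimator `A_usw(v) = (A_sw(v) − q/2 − qb)/(2b(p−q))` is an unbiased
estimator of `v`: if `X` has the SW density with input `v`, then
`E[(X − q/2 − q·b)/(2b(p−q))] = v`. -/
theorem sw_unbiased_estimator {Ω : Type*} [MeasureSpace Ω]
    [IsProbabilityMeasure (volume : Measure Ω)]
    (ε : ℝ) (hε : 0 < ε) (v : ℝ) (hv : v ∈ Set.Icc (0 : ℝ) 1)
    (b p q : ℝ)
    (hb : b = (ε * exp ε - exp ε + 1) / (2 * exp ε * (exp ε - ε - 1)))
    (hp : p = exp ε / (2 * b * exp ε + 1))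
    (hq : q = 1 / (2 * b * exp ε + 1))
    (X : Ω → ℝ)
    (hX : Measure.map X volume =
      (volume : Measure ℝ).withDensity (fun x => ENNReal.ofReal
        (if x ∈ Set.Icc (v - b) (v + b) then p
         else if x ∈ Set.Icc (-b) (1 + b) then q else 0))) :
    (∫ ω, (X ω - q / 2 - q * b) / (2 * b * (p - q))) = v := by
  subst hp hq hb
  have hb := swHalfWidth_pos hε.ne'
  exact sw_unbiased_estimator_general hb (swHigh_nonneg ε hb.le) (swLow_nonneg ε hb.le)
    (swHigh_ne_swLow hε.ne' hb.le) (two_mul_mul_swHigh_add_swLow ε hb.le) hv hX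
end

section
/- For every ε > 0 and every v ∈ [0,1], if X is a real random variable whose law has density ρ of the SW mechanism with input v, then its variance satisfies Var(X) = q·(b³ − (b+v)³ − (b−v)³ + (b+1)³)/3 − (q + 2bq + 4bpv − 4bqv)²/4 + 2bp(b² + 3v²)/3. -/
open Real MeasureTheory ProbabilityTheory

/-! The square wave law is `p` times Lebesgue measure on the window `[v - b, v + b]` plus `q` times
Lebesgue measure on the rest of `[-b, 1 + b]`. The window lies inside `[-b, 1 + b]`, so integration
against this law is `q ∫_{-b}^{1+b} + (p - q) ∫_{v-b}^{v+b}`. This gives all moments, and the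
variance is the second moment minus the square of the first. For the mechanism, `p = e^ε q` and the
choice of `q` give `2bp + q = 1`, while `b > 0` because `1 - ε < e^(-ε)` and `1 + ε < e^ε`. -/

lemma withDensity_ite_ite {α : Type*} [MeasurableSpace α] {μ : Measure α} {s t : Set α}
    [DecidablePred (· ∈ s)] [DecidablePred (· ∈ t)]
    (hs : MeasurableSet s) (ht : MeasurableSet t) (c d : ENNReal) :
    μ.withDensity (fun x => if x ∈ s then c else if x ∈ t then d else 0) =
      c • μ.restrict s + d • μ.restrict (t \ s) := by
  have hsplit : (fun x => if x ∈ s then c else if x ∈ t then d else 0) =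
      s.indicator (fun _ => c) + (t \ s).indicator (fun _ => d) := by
    ext x
    by_cases hxs : x ∈ s <;> by_cases hxt : x ∈ t <;> simp [hxs, hxt]
  rw [hsplit, withDensity_add_left (measurable_const.indicator hs), withDensity_indicator hs,
    withDensity_indicator (ht.diff hs), withDensity_const, withDensity_const]

/-- The law of the square wave mechanism on input `v`, with window half-width `b`, density `p` on
the window and density `q` on the rest of `[-b, 1 + b]`. The parameters are independent of each
other, so the total mass need not be `1`. -/
noncomputable def squareWaveMeasure (b p q v : ℝ) : Measure ℝ :=
  volume.withDensity fun x => ENNReal.ofReal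
    (if x ∈ Set.Icc (v - b) (v + b) then p else if x ∈ Set.Icc (-b) (1 + b) then q else 0)

section SquareWave

variable {E : Type*} [NormedAddCommGroup E] {b p q v : ℝ}

lemma squareWaveMeasure_eq_smul_restrict_add_smul_restrict (b p q v : ℝ) :
    squareWaveMeasure b p q v =
      ENNReal.ofReal p • volume.restrict (Set.Icc (v - b) (v + b)) +
        ENNReal.ofReal q •
          volume.restrict (Set.Icc (-b) (1 + b) \ Set.Icc (v - b) (v + b)) := by
  rw [← withDensity_ite_ite measurableSet_Icc measurableSet_Icc, squareWaveMeasure]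
  congr with x
  simp only [apply_ite ENNReal.ofReal, ENNReal.ofReal_zero]

lemma integrable_squareWaveMeasure {g : ℝ → E} (hg : LocallyIntegrable g) (b p q v : ℝ) :
    Integrable g (squareWaveMeasure b p q v) := by
  have hwindow : IntegrableOn g (Set.Icc (v - b) (v + b)) := hg.integrableOn_isCompact isCompact_Icc
  have hrest : IntegrableOn g (Set.Icc (-b) (1 + b) \ Set.Icc (v - b) (v + b)) :=
    (hg.integrableOn_isCompact isCompact_Icc).mono_set Set.sdiff_subset
  rw [squareWaveMeasure_eq_smul_restrict_add_smul_restrict]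
  exact (hwindow.smul_measure ENNReal.ofReal_ne_top).add_measure
    (hrest.smul_measure ENNReal.ofReal_ne_top)

lemma integral_squareWaveMeasure [NormedSpace ℝ E] {g : ℝ → E} (hg : LocallyIntegrable g)
    (hv : v ∈ Set.Icc (0 : ℝ) 1) (hb : 0 ≤ b) (hp : 0 ≤ p) (hq : 0 ≤ q) :
    ∫ x, g x ∂squareWaveMeasure b p q v =
      q • (∫ x in (-b)..(1 + b), g x) + (p - q) • ∫ x in (v - b)..(v + b), g x := by
  have hsub : Set.Icc (v - b) (v + b) ⊆ Set.Icc (-b) (1 + b) :=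
    Set.Icc_subset_Icc (by linarith [hv.1]) (by linarith [hv.2])
  have hint := integrable_squareWaveMeasure hg b p q v
  rw [squareWaveMeasure_eq_smul_restrict_add_smul_restrict, integrable_add_measure] at hint
  rw [squareWaveMeasure_eq_smul_restrict_add_smul_restrict,
    integral_add_measure hint.1 hint.2, integral_smul_measure, integral_smul_measure,
    ENNReal.toReal_ofReal hp, ENNReal.toReal_ofReal hq,
    setIntegral_sdiff measurableSet_Icc (hg.integrableOn_isCompact isCompact_Icc) hsub,
    integral_Icc_eq_integral_Ioc, integral_Icc_eq_integral_Ioc,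
    ← intervalIntegral.integral_of_le (by linarith),
    ← intervalIntegral.integral_of_le (by linarith [hv.1, hv.2])]
  module

lemma integral_pow_squareWaveMeasure (n : ℕ)
    (hv : v ∈ Set.Icc (0 : ℝ) 1) (hb : 0 ≤ b) (hp : 0 ≤ p) (hq : 0 ≤ q) :
    ∫ x, x ^ n ∂squareWaveMeasure b p q v =
      q * (((1 + b) ^ (n + 1) - (-b) ^ (n + 1)) / (n + 1)) +
        (p - q) * (((v + b) ^ (n + 1) - (v - b) ^ (n + 1)) / (n + 1)) := by
  rw [integral_squareWaveMeasure (continuous_pow n).locallyIntegrable hv hb hp hq,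
    integral_pow, integral_pow, smul_eq_mul, smul_eq_mul]

lemma isProbabilityMeasure_squareWaveMeasure
    (hv : v ∈ Set.Icc (0 : ℝ) 1) (hb : 0 ≤ b) (hp : 0 ≤ p) (hq : 0 ≤ q)
    (hmass : 2 * b * p + q = 1) : IsProbabilityMeasure (squareWaveMeasure b p q v) := by
  have hmoment := integral_pow_squareWaveMeasure 0 hv hb hp hq
  simp only [pow_zero, integral_const, smul_eq_mul, mul_one] at hmoment
  rw [isProbabilityMeasure_iff_real, hmoment]
  push_cast
  linear_combination hmass

lemma memLp_two_id_squareWaveMeasure (b p q v : ℝ) :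
    MemLp id 2 (squareWaveMeasure b p q v) :=
  (memLp_two_iff_integrable_sq aestronglyMeasurable_id).2
    (integrable_squareWaveMeasure (continuous_pow 2).locallyIntegrable b p q v)

lemma integral_id_squareWaveMeasure
    (hv : v ∈ Set.Icc (0 : ℝ) 1) (hb : 0 ≤ b) (hp : 0 ≤ p) (hq : 0 ≤ q) :
    ∫ x, x ∂squareWaveMeasure b p q v =
      (q + 2 * b * q + 4 * b * p * v - 4 * b * q * v) / 2 := by
  have hmoment := integral_pow_squareWaveMeasure 1 hv hb hp hq
  simp only [pow_one] at hmoment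
  rw [hmoment]
  push_cast
  ring

lemma integral_sq_squareWaveMeasure
    (hv : v ∈ Set.Icc (0 : ℝ) 1) (hb : 0 ≤ b) (hp : 0 ≤ p) (hq : 0 ≤ q) :
    ∫ x, x ^ 2 ∂squareWaveMeasure b p q v =
      q * (b ^ 3 - (b + v) ^ 3 - (b - v) ^ 3 + (b + 1) ^ 3) / 3 +
        2 * b * p * (b ^ 2 + 3 * v ^ 2) / 3 := by
  rw [integral_pow_squareWaveMeasure 2 hv hb hp hq]
  push_cast
  ring

theorem sw_variance_general {Ω : Type*} [MeasurableSpace Ω] {P : Measure Ω} {X : Ω → ℝ}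
    (hv : v ∈ Set.Icc (0 : ℝ) 1) (hb : 0 ≤ b) (hp : 0 ≤ p) (hq : 0 ≤ q)
    (hmass : 2 * b * p + q = 1) (hX : P.map X = squareWaveMeasure b p q v) :
    variance X P =
      q * (b ^ 3 - (b + v) ^ 3 - (b - v) ^ 3 + (b + 1) ^ 3) / 3 -
        (q + 2 * b * q + 4 * b * p * v - 4 * b * q * v) ^ 2 / 4 +
        2 * b * p * (b ^ 2 + 3 * v ^ 2) / 3 := by
  have hprob := isProbabilityMeasure_squareWaveMeasure hv hb hp hq hmass
  -- A non-measurable `X` would have pushforward `0` by convention.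
  have hXm : AEMeasurable X P := .of_map_ne_zero (hX ▸ hprob.ne_zero)
  rw [← variance_id_map hXm, hX, variance_eq_sub (memLp_two_id_squareWaveMeasure b p q v)]
  simp only [Pi.pow_apply, id_eq]
  rw [integral_sq_squareWaveMeasure hv hb hp hq, integral_id_squareWaveMeasure hv hb hp hq]
  ring

end SquareWave

lemma mul_exp_sub_exp_add_one_pos {ε : ℝ} (hε : ε ≠ 0) : 0 < ε * exp ε - exp ε + 1 := by
  have hlt : (-ε + 1) * exp ε < exp (-ε) * exp ε :=
    mul_lt_mul_of_pos_right (add_one_lt_exp (neg_ne_zero.mpr hε)) (exp_pos ε)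
  rw [← exp_add, neg_add_cancel, exp_zero] at hlt
  linarith

lemma squareWave_halfWidth_pos {ε : ℝ} (hε : ε ≠ 0) :
    0 < (ε * exp ε - exp ε + 1) / (2 * exp ε * (exp ε - ε - 1)) := by
  have hnum := mul_exp_sub_exp_add_one_pos hε
  have hden : 0 < exp ε - ε - 1 := by linarith [add_one_lt_exp hε]
  positivity

/-- Variance of the SW mechanism: if `X` has the SW density with input `v`, then
`Var(X) = q(b³ − (b+v)³ − (b−v)³ + (b+1)³)/3 − (q + 2bq + 4bpv − 4bqv)²/4 + 2bp(b² + 3v²)/3`. -/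
theorem sw_variance {Ω : Type*} [MeasureSpace Ω]
    [IsProbabilityMeasure (volume : Measure Ω)]
    (ε : ℝ) (hε : 0 < ε) (v : ℝ) (hv : v ∈ Set.Icc (0 : ℝ) 1)
    (b p q : ℝ)
    (hb : b = (ε * exp ε - exp ε + 1) / (2 * exp ε * (exp ε - ε - 1)))
    (hp : p = exp ε / (2 * b * exp ε + 1))
    (hq : q = 1 / (2 * b * exp ε + 1))
    (X : Ω → ℝ)
    (hX : Measure.map X volume =
      (volume : Measure ℝ).withDensity (fun x => ENNReal.ofReal
        (if x ∈ Set.Icc (v - b) (v + b) then p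
         else if x ∈ Set.Icc (-b) (1 + b) then q else 0))) :
    variance X volume =
      q * (b ^ 3 - (b + v) ^ 3 - (b - v) ^ 3 + (b + 1) ^ 3) / 3 -
        (q + 2 * b * q + 4 * b * p * v - 4 * b * q * v) ^ 2 / 4 +
        2 * b * p * (b ^ 2 + 3 * v ^ 2) / 3 := by
  have hb_nonneg : 0 ≤ b := hb ▸ (squareWave_halfWidth_pos hε.ne').le
  subst hp hq
  exact sw_variance_general hv hb_nonneg (by positivity) (by positivity) (by field_simp) hX
end

section
/- The SR mechanism satisfies ε-local differential privacy: for every ε > 0 and all inputs v, v' ∈ [−1,1], both p(v) ≤ e^ε · p(v') and 1 − p(v) ≤ e^ε · (1 − p(v')). -/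
open Real

/-- The probability with which Stochastic Rounding outputs the positive value on input `v`.
The parameter `E` stands for `e ^ ε`, so the formula is rational in `E` and needs no
exponential; it is degenerate at `E = -1`, where the denominator vanishes. -/
def srProb {K : Type*} [Field K] (E v : K) : K :=
  (E - 1) / (2 * E + 2) * v + 1 / 2

section Field

variable {K : Type*} [Field K] [NeZero (2 : K)] {E : K}

theorem srProb_neg (E v : K) : srProb E (-v) = 1 - srProb E v := by
  unfold srProb
  linear_combination add_halves (1 : K)

theorem srProb_one_eq_mul_srProb_neg_one (hE : E + 1 ≠ 0) :
    srProb E 1 = E * srProb E (-1) := by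
  have h2 : (2 : K) ≠ 0 := two_ne_zero
  have hden : 2 * E + 2 = 2 * (E + 1) := by ring
  unfold srProb
  rw [hden]
  field_simp
  ring

end Field

section LinearOrderedField

variable {K : Type*} [Field K] [LinearOrder K] [IsStrictOrderedRing K] {E v w : K}

theorem srProb_monotone (hE : 1 ≤ E) : Monotone (srProb E) := by
  have hslope : 0 ≤ (E - 1) / (2 * E + 2) := div_nonneg (by linarith) (by linarith)
  exact (monotone_id.const_mul hslope).add_const _

theorem srProb_le_mul_srProb (hE : 1 ≤ E) (hv : v ≤ 1) (hw : -1 ≤ w) :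
    srProb E v ≤ E * srProb E w := by
  have hE₀ : 0 < E := zero_lt_one.trans_le hE
  calc
    srProb E v ≤ srProb E 1 := srProb_monotone hE hv
    _ = E * srProb E (-1) := srProb_one_eq_mul_srProb_neg_one (by positivity)
    _ ≤ E * srProb E w := mul_le_mul_of_nonneg_left (srProb_monotone hE hw) hE₀.le

end LinearOrderedField

/-- The SR mechanism satisfies `ε`-local differential privacy: for all inputs
`v, v' ∈ [−1,1]`, both `p(v) ≤ e^ε · p(v')` and `1 − p(v) ≤ e^ε · (1 − p(v'))`. -/
theorem sr_ldp (ε : ℝ) (hε : 0 < ε)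
    (p : ℝ → ℝ) (hp : ∀ v, p v = (exp ε - 1) / (2 * exp ε + 2) * v + 1 / 2) :
    ∀ v ∈ Set.Icc (-1 : ℝ) 1, ∀ v' ∈ Set.Icc (-1 : ℝ) 1,
      p v ≤ exp ε * p v' ∧ 1 - p v ≤ exp ε * (1 - p v') := by
  obtain rfl : p = srProb (exp ε) := funext hp
  have hE : 1 ≤ exp ε := one_le_exp hε.le
  rintro v ⟨hv_ge, hv_le⟩ w ⟨hw_ge, hw_le⟩
  constructor
  · exact srProb_le_mul_srProb hE hv_le hw_ge
  · rw [← srProb_neg, ← srProb_neg]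
    exact srProb_le_mul_srProb hE (neg_le.mp hv_ge) (neg_le_neg hw_le)
end

section
/- For every ε > 0 and every v ∈ [−1,1], the PM mechanism is unbiased: ∫_{−C}^{l(v)} x·ρ₂ dx + ∫_{l(v)}^{r(v)} x·ρ₁ dx + ∫_{r(v)}^{C} x·ρ₂ dx = v, where ρ₁ = (e^ε − e^{ε/2})/(2(e^{ε/2}+1)) and ρ₂ = (e^{ε/2}−1)/(2(e^{ε/2}+e^ε)). -/
open Real

/-!
Subtract the constant density `ρ₂` from the whole range `[-C, C]`: its first moment vanishes by
symmetry, so only the excess `ρ₁ - ρ₂` on `[l, r]` contributes, and the mean is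
`(ρ₁ - ρ₂) * (r ^ 2 - l ^ 2) / 2`. The interval `[l, r]` has length `C - 1` and endpoints summing to
`(C + 1) * v`, which turns the mean into `(ρ₁ - ρ₂) * (C ^ 2 - 1) / 2 * v`. Since
`ρ₁ - ρ₂ = cosh (ε / 2) - 1 = 2 * sinh (ε / 4) ^ 2` and `C = coth (ε / 4)`, the factor of `v` is
`1`.
-/

theorem intervalIntegral_eq_zero_of_odd {E : Type*} [NormedAddCommGroup E] [NormedSpace ℝ E]
    {f : ℝ → E} (hf : f.Odd) (a : ℝ) : ∫ x in (-a)..a, f x = 0 := by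
  have : IsAddTorsionFree E := .of_isTorsionFree ℝ E
  refine self_eq_neg.mp ?_
  calc ∫ x in (-a)..a, f x = ∫ x in (-a)..a, f (-x) := by
        rw [intervalIntegral.integral_comp_neg, neg_neg]
    _ = -∫ x in (-a)..a, f x := by simp only [hf _, intervalIntegral.integral_neg]

theorem intervalIntegral_mul_step_of_odd {𝕜 : Type*} [RCLike 𝕜] {f : ℝ → 𝕜} (hodd : f.Odd)
    (hf : MeasureTheory.LocallyIntegrable f) (a l r : ℝ) (p q : 𝕜) :
    (∫ x in (-a)..l, f x * q) + (∫ x in l..r, f x * p) + (∫ x in r..a, f x * q) =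
      (∫ x in l..r, f x) * (p - q) := by
  have hint (b c : ℝ) : IntervalIntegrable f MeasureTheory.volume b c :=
    (hf.integrableOn_isCompact isCompact_uIcc).intervalIntegrable
  have baseline : (∫ x in (-a)..l, f x) + (∫ x in l..r, f x) + (∫ x in r..a, f x) = 0 := by
    rw [intervalIntegral.integral_add_adjacent_intervals (hint _ _) (hint _ _),
      intervalIntegral.integral_add_adjacent_intervals (hint _ _) (hint _ _),
      intervalIntegral_eq_zero_of_odd hodd]
  simp only [intervalIntegral.integral_mul_const]
  linear_combination q * baseline

theorem pm_mean_eq (C v ρ₁ ρ₂ : ℝ) {l r : ℝ} (hl : l = (C + 1) / 2 * v - (C - 1) / 2)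
    (hr : r = l + C - 1) :
    (∫ x in (-C)..l, x * ρ₂) + (∫ x in l..r, x * ρ₁) + (∫ x in r..C, x * ρ₂) =
      (ρ₁ - ρ₂) * (C ^ 2 - 1) / 2 * v := by
  have length : r - l = C - 1 := by rw [hr]; ring
  have endpoint_sum : r + l = (C + 1) * v := by rw [hr, hl]; ring
  calc (∫ x in (-C)..l, x * ρ₂) + (∫ x in l..r, x * ρ₁) + (∫ x in r..C, x * ρ₂)
      = (∫ x in l..r, x) * (ρ₁ - ρ₂) :=
        intervalIntegral_mul_step_of_odd (f := fun x ↦ x) (fun _ ↦ rfl)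
          continuous_id.locallyIntegrable C l r ρ₁ ρ₂
    _ = (ρ₁ - ρ₂) / 2 * ((r - l) * (r + l)) := by rw [integral_id]; ring
    _ = (ρ₁ - ρ₂) * (C ^ 2 - 1) / 2 * v := by rw [length, endpoint_sum]; ring

theorem cosh_sub_one_eq_exp_sub_one_sq_div (x : ℝ) :
    cosh x - 1 = (exp x - 1) ^ 2 / (2 * exp x) := by
  rw [cosh_eq, exp_neg]
  field_simp
  ring

theorem pm_density_sub_eq_cosh_sub_one (ε : ℝ) :
    (exp ε - exp (ε / 2)) / (2 * (exp (ε / 2) + 1)) -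
      (exp (ε / 2) - 1) / (2 * (exp (ε / 2) + exp ε)) = cosh (ε / 2) - 1 := by
  have exp_eq_sq : exp ε = exp (ε / 2) ^ 2 := by rw [sq, ← exp_add, add_halves]
  rw [cosh_sub_one_eq_exp_sub_one_sq_div, exp_eq_sq]
  field_simp
  ring

theorem pm_bound_sq_sub_one_eq {x : ℝ} (hx : x ≠ 0) :
    ((exp x + 1) / (exp x - 1)) ^ 2 - 1 = 2 / (cosh x - 1) := by
  have exp_sub_one_ne_zero : exp x - 1 ≠ 0 := by simpa [sub_eq_zero] using hx
  rw [cosh_sub_one_eq_exp_sub_one_sq_div]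
  field_simp
  ring

theorem pm_unbiased_general {ε : ℝ} (hε : ε ≠ 0) (v : ℝ) {C l r ρ₁ ρ₂ : ℝ}
    (hC : C = (exp (ε / 2) + 1) / (exp (ε / 2) - 1))
    (hl : l = (C + 1) / 2 * v - (C - 1) / 2)
    (hr : r = l + C - 1)
    (hρ₁ : ρ₁ = (exp ε - exp (ε / 2)) / (2 * (exp (ε / 2) + 1)))
    (hρ₂ : ρ₂ = (exp (ε / 2) - 1) / (2 * (exp (ε / 2) + exp ε))) :
    (∫ x in (-C)..l, x * ρ₂) + (∫ x in l..r, x * ρ₁) + (∫ x in r..C, x * ρ₂) = v := by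
  have half_ne_zero : ε / 2 ≠ 0 := div_ne_zero hε two_ne_zero
  have density_gap : ρ₁ - ρ₂ = cosh (ε / 2) - 1 := by
    rw [hρ₁, hρ₂, pm_density_sub_eq_cosh_sub_one]
  have bound : C ^ 2 - 1 = 2 / (cosh (ε / 2) - 1) := by
    rw [hC, pm_bound_sq_sub_one_eq half_ne_zero]
  have gap_ne_zero : cosh (ε / 2) - 1 ≠ 0 := (sub_pos.mpr (one_lt_cosh.mpr half_ne_zero)).ne'
  rw [pm_mean_eq C v ρ₁ ρ₂ hl hr, density_gap, bound, mul_div_cancel₀ _ gap_ne_zero,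
    div_self two_ne_zero, one_mul]

/-- The PM mechanism is unbiased:
`∫_{−C}^{l(v)} x·ρ₂ dx + ∫_{l(v)}^{r(v)} x·ρ₁ dx + ∫_{r(v)}^{C} x·ρ₂ dx = v`. -/
theorem pm_unbiased (ε : ℝ) (hε : 0 < ε) (v : ℝ) (hv : v ∈ Set.Icc (-1 : ℝ) 1)
    (C l r ρ₁ ρ₂ : ℝ)
    (hC : C = (exp (ε / 2) + 1) / (exp (ε / 2) - 1))
    (hl : l = (C + 1) / 2 * v - (C - 1) / 2)
    (hr : r = l + C - 1)
    (hρ₁ : ρ₁ = (exp ε - exp (ε / 2)) / (2 * (exp (ε / 2) + 1)))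
    (hρ₂ : ρ₂ = (exp (ε / 2) - 1) / (2 * (exp (ε / 2) + exp ε))) :
    (∫ x in (-C)..l, x * ρ₂) + (∫ x in l..r, x * ρ₁) + (∫ x in r..C, x * ρ₂) = v :=
  pm_unbiased_general hε.ne' v hC hl hr hρ₁ hρ₂
end

section
/- For every ε > 0 and every v ∈ [−1,1], if X is a real random variable distributed according to the PM density with input v, then Var(X) = v²/(e^{ε/2} − 1) + (e^{ε/2} + 3)/(3(e^{ε/2} − 1)²). -/
open Real MeasureTheory ProbabilityTheory

/-!
With `s = e^{ε/2}`, the PM density is a mixture: with probability `1/s` the output is uniform on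
`[-C, C]`, and with probability `1 - 1/s` it is uniform on `[l, r]`, an interval of length
`2/(s - 1)` centred at `s v/(s - 1)`. By the law of total variance, the spread between the two
centres contributes `(1/s) (1 - 1/s) (s v/(s - 1))² = v²/(s - 1)`, and the variances of the two
uniform laws contribute the term independent of `v`.
-/

open scoped NNReal

section Mixture

variable {Ω : Type*} [MeasurableSpace Ω] {μ ν : Measure Ω} {p q : ℝ≥0}

lemma isProbabilityMeasure_smul_add_smul [IsProbabilityMeasure μ] [IsProbabilityMeasure ν]
    (hpq : p + q = 1) : IsProbabilityMeasure (p • μ + q • ν) where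
  measure_univ := by
    simp only [Measure.add_apply, Measure.smul_apply, measure_univ, ENNReal.smul_def, smul_eq_mul,
      mul_one]
    exact_mod_cast hpq

lemma integral_smul_add_smul_measure {E : Type*} [NormedAddCommGroup E] [NormedSpace ℝ E]
    {f : Ω → E} (hμ : Integrable f μ) (hν : Integrable f ν) :
    ∫ ω, f ω ∂(p • μ + q • ν) = p • ∫ ω, f ω ∂μ + q • ∫ ω, f ω ∂ν := by
  rw [integral_add_measure hμ.smul_measure_nnreal hν.smul_measure_nnreal,
    integral_smul_nnreal_measure, integral_smul_nnreal_measure]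

lemma variance_smul_add_smul_measure [IsProbabilityMeasure μ] [IsProbabilityMeasure ν] {X : Ω → ℝ}
    (hμ : MemLp X 2 μ) (hν : MemLp X 2 ν) (hpq : p + q = 1) :
    Var[X; p • μ + q • ν] = p * Var[X; μ] + q * Var[X; ν] + p * q * (μ[X] - ν[X]) ^ 2 := by
  have := isProbabilityMeasure_smul_add_smul (μ := μ) (ν := ν) hpq
  have hq : (q : ℝ) = 1 - p := by rw [eq_sub_iff_add_eq']; exact_mod_cast hpq
  have hX : MemLp X 2 (p • μ + q • ν) :=
    (memLp_two_iff_integrable_sq <|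
      (hμ.aestronglyMeasurable.smul_measure _).add_measure
        (hν.aestronglyMeasurable.smul_measure _)).2 <|
      hμ.integrable_sq.smul_measure_nnreal.add_measure hν.integrable_sq.smul_measure_nnreal
  rw [variance_eq_sub hX, variance_eq_sub hμ, variance_eq_sub hν]
  simp only [Pi.pow_apply]
  rw [integral_smul_add_smul_measure hμ.integrable_sq hν.integrable_sq,
    integral_smul_add_smul_measure (hμ.integrable one_le_two) (hν.integrable one_le_two)]
  simp only [NNReal.smul_def, smul_eq_mul, hq]
  ring

end Mixture

section Density

variable {Ω : Type*} [MeasurableSpace Ω] {μ : Measure Ω} {s t : Set Ω}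

lemma cond_eq_withDensity_indicator (hs : MeasurableSet s) :
    μ[|s] = μ.withDensity (s.indicator fun _ ↦ (μ s)⁻¹) := by
  rw [withDensity_indicator hs, withDensity_const, ProbabilityTheory.cond]

lemma smul_cond_add_smul_cond_eq_withDensity (hs : MeasurableSet s) (ht : MeasurableSet t)
    (hst : s ⊆ t) (hs₀ : μ s ≠ 0) (ht_top : μ t ≠ ⊤) (p q : ℝ≥0) [DecidablePred (· ∈ s)]
    [DecidablePred (· ∈ t)] :
    p • μ[|t] + q • μ[|s] = μ.withDensity fun x ↦ ENNReal.ofReal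
      (if x ∈ s then p / μ.real t + q / μ.real s else if x ∈ t then p / μ.real t else 0) := by
  have ofReal_div (c : ℝ≥0) {u : Set Ω} (hu₀ : μ u ≠ 0) (hu_top : μ u ≠ ⊤) :
      ENNReal.ofReal (c / μ.real u) = c * (μ u)⁻¹ := by
    have hu : 0 < μ.real u := ENNReal.toReal_pos hu₀ hu_top
    rw [ENNReal.ofReal_div_of_pos hu, ENNReal.ofReal_coe_nnreal,
      ofReal_measureReal hu_top, div_eq_mul_inv]
  have hs_top : μ s ≠ ⊤ := measure_ne_top_of_subset hst ht_top
  have ht₀ : μ t ≠ 0 := fun h ↦ hs₀ (measure_mono_null hst h)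
  have hmeas {u : Set Ω} (hu : MeasurableSet u) : Measurable (u.indicator fun _ ↦ (μ u)⁻¹) :=
    measurable_const.indicator hu
  rw [cond_eq_withDensity_indicator hs, cond_eq_withDensity_indicator ht, ENNReal.smul_def,
    ENNReal.smul_def, ← withDensity_smul _ (hmeas ht), ← withDensity_smul _ (hmeas hs),
    ← withDensity_add_left ((hmeas ht).const_smul _)]
  congr 1 with x
  by_cases hxs : x ∈ s
  · simp only [Pi.add_apply, Pi.smul_apply, smul_eq_mul, Set.indicator_of_mem, hxs, hst hxs,
      if_pos]
    rw [ENNReal.ofReal_add (by positivity) (by positivity), ofReal_div p ht₀ ht_top,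
      ofReal_div q hs₀ hs_top]
  · by_cases hxt : x ∈ t <;> simp [hxs, hxt, ofReal_div p ht₀ ht_top]

end Density

section Uniform

variable {a b : ℝ}

lemma isProbabilityMeasure_cond_Icc (hab : a < b) :
    IsProbabilityMeasure (volume : Measure ℝ)[|Set.Icc a b] :=
  cond_isProbabilityMeasure_of_finite (by simpa using hab) (by simp)

lemma integral_cond_Icc {E : Type*} [NormedAddCommGroup E] [NormedSpace ℝ E] (hab : a ≤ b)
    (f : ℝ → E) : ∫ x, f x ∂volume[|Set.Icc a b] = (b - a)⁻¹ • ∫ x in a..b, f x := by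
  rw [ProbabilityTheory.cond, integral_smul_measure, integral_Icc_eq_integral_Ioc,
    intervalIntegral.integral_of_le hab, volume_Icc, ENNReal.toReal_inv,
    ENNReal.toReal_ofReal (sub_nonneg.2 hab)]

lemma integral_id_cond_Icc (hab : a < b) : ∫ x, x ∂volume[|Set.Icc a b] = (a + b) / 2 := by
  have : b - a ≠ 0 := (sub_pos.2 hab).ne'
  rw [integral_cond_Icc hab.le, integral_id, smul_eq_mul]
  field_simp
  ring

lemma variance_id_cond_Icc (hab : a < b) :
    Var[id; volume[|Set.Icc a b]] = (b - a) ^ 2 / 12 := by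
  have : b - a ≠ 0 := (sub_pos.2 hab).ne'
  simp only [variance_eq_integral aemeasurable_id, id_eq]
  rw [integral_id_cond_Icc hab, integral_cond_Icc hab.le,
    intervalIntegral.integral_comp_sub_right (fun x ↦ x ^ 2), integral_pow, smul_eq_mul]
  field_simp
  ring

lemma memLp_id_cond_Icc (a b : ℝ) (p : ENNReal) : MemLp id p (volume : Measure ℝ)[|Set.Icc a b] :=
  memLp_of_bounded (ae_cond_mem measurableSet_Icc) aestronglyMeasurable_id p

lemma variance_of_map_eq_withDensity_step {Ω : Type*} [MeasurableSpace Ω] {P : Measure Ω}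
    {X : Ω → ℝ} {l r p q : ℝ} (hal : a ≤ l) (hlr : l < r) (hrb : r ≤ b) (hp : 0 ≤ p) (hq : 0 ≤ q)
    (hpq : p + q = 1)
    (hX : P.map X = volume.withDensity fun x ↦ ENNReal.ofReal
      (if x ∈ Set.Icc l r then p / (b - a) + q / (r - l)
        else if x ∈ Set.Icc a b then p / (b - a) else 0)) :
    Var[X; P] = p * ((b - a) ^ 2 / 12) + q * ((r - l) ^ 2 / 12)
      + p * q * ((a + b) / 2 - (l + r) / 2) ^ 2 := by
  lift p to ℝ≥0 using hp
  lift q to ℝ≥0 using hq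
  norm_cast at hpq
  have hab : a < b := by linarith
  have := isProbabilityMeasure_cond_Icc hab
  have := isProbabilityMeasure_cond_Icc hlr
  have hmix : P.map X = p • volume[|Set.Icc a b] + q • volume[|Set.Icc l r] := by
    rw [hX, smul_cond_add_smul_cond_eq_withDensity measurableSet_Icc measurableSet_Icc
      (Set.Icc_subset_Icc hal hrb) (by simpa using hlr) (by simp), volume_real_Icc_of_le hab.le,
      volume_real_Icc_of_le hlr.le]
  have hmap : IsProbabilityMeasure (P.map X) := hmix ▸ isProbabilityMeasure_smul_add_smul hpq
  have hXm : AEMeasurable X P := .of_map_ne_zero hmap.ne_zero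
  rw [← variance_id_map hXm, hmix, variance_smul_add_smul_measure (memLp_id_cond_Icc ..)
    (memLp_id_cond_Icc ..) hpq, variance_id_cond_Icc hab, variance_id_cond_Icc hlr]
  simp only [id_eq, integral_id_cond_Icc hab, integral_id_cond_Icc hlr]

end Uniform

/-- Variance of the PM mechanism: if `X` is distributed according to the PM density with
input `v`, then `Var(X) = v²/(e^{ε/2} − 1) + (e^{ε/2} + 3)/(3(e^{ε/2} − 1)²)`. -/
theorem pm_variance {Ω : Type*} [MeasureSpace Ω]
    [IsProbabilityMeasure (volume : Measure Ω)]
    (ε : ℝ) (hε : 0 < ε) (v : ℝ) (hv : v ∈ Set.Icc (-1 : ℝ) 1)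
    (C l r ρ₁ ρ₂ : ℝ)
    (hC : C = (exp (ε / 2) + 1) / (exp (ε / 2) - 1))
    (hl : l = (C + 1) / 2 * v - (C - 1) / 2)
    (hr : r = l + C - 1)
    (hρ₁ : ρ₁ = (exp ε - exp (ε / 2)) / (2 * (exp (ε / 2) + 1)))
    (hρ₂ : ρ₂ = (exp (ε / 2) - 1) / (2 * (exp (ε / 2) + exp ε)))
    (X : Ω → ℝ)
    (hX : Measure.map X volume =
      (volume : Measure ℝ).withDensity (fun x => ENNReal.ofReal
        (if x ∈ Set.Icc l r then ρ₁
         else if x ∈ Set.Icc (-C) C then ρ₂ else 0))) :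
    variance X volume =
      v ^ 2 / (exp (ε / 2) - 1) + (exp (ε / 2) + 3) / (3 * (exp (ε / 2) - 1) ^ 2) := by
  have hs : 1 < exp (ε / 2) := one_lt_exp_iff.2 (half_pos hε)
  have he : exp ε = exp (ε / 2) ^ 2 := by rw [← exp_nat_mul]; congr 1; push_cast; ring
  rw [he] at hρ₁ hρ₂
  generalize exp (ε / 2) = s at *
  have hs₁ : 0 < s - 1 := sub_pos.2 hs
  have hs_inv : 1 / s ≤ 1 := (div_le_one (by positivity)).2 hs.le
  have hC₁ : 1 < C := by rw [hC, lt_div_iff₀ hs₁]; linarith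
  have hCl : -C ≤ l := by nlinarith [hv.1]
  have hrC : r ≤ C := by nlinarith [hv.2]
  have hwidth : r - l = 2 / (s - 1) := by rw [hr, hC]; field_simp; ring
  have hmid : (l + r) / 2 = s * v / (s - 1) := by rw [hr, hl, hC]; field_simp; ring
  have hρ₂' : ρ₂ = 1 / s / (C - -C) := by rw [hρ₂, hC]; field_simp; ring
  have hρ₁' : ρ₁ = 1 / s / (C - -C) + (1 - 1 / s) / (r - l) := by
    rw [hρ₁, hwidth, hC]; field_simp; ring
  rw [hρ₁', hρ₂'] at hX
  calc variance X volume
    _ = 1 / s * ((C - -C) ^ 2 / 12) + (1 - 1 / s) * ((r - l) ^ 2 / 12)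
        + 1 / s * (1 - 1 / s) * ((-C + C) / 2 - (l + r) / 2) ^ 2 :=
      variance_of_map_eq_withDensity_step hCl (by linarith) hrC (by positivity)
        (sub_nonneg.2 hs_inv) (add_sub_cancel _ _) hX
    _ = _ := by rw [hwidth, hmid, hC]; field_simp; ring
end

section
/- The PM mechanism satisfies ε-local differential privacy with its two density levels in exact ratio e^ε: for every ε > 0, (e^ε − e^{ε/2})/(2(e^{ε/2}+1)) = e^ε · (e^{ε/2}−1)/(2(e^{ε/2}+e^ε)), and hence for all inputs v, v' ∈ [−1,1] and every output x ∈ [−C, C], ρ_v(x) ≤ e^ε · ρ_{v'}(x), where ρ_v denotes the PM density with input v. -/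
open Real

/-!
With `t = e^{ε/2}` the two levels of the density are `t (t - 1) / (2 (t + 1))` and
`(t - 1) / (2 t (t + 1))`, so their ratio is `t² = e^ε`. Two values that both lie between
`a` and `e^ε a` differ by a factor of at most `e^ε`.
-/

/-- `ε`-local differential privacy, at the outputs in `D`, of the family `ρ` of densities indexed
by the inputs. Privacy at all outputs is the case `D = Set.univ`. -/
def IsLocallyPrivate {ι Ω : Type*} (ε : ℝ) (D : Set Ω) (ρ : ι → Ω → ℝ) : Prop :=
  ∀ v v', ∀ x ∈ D, ρ v x ≤ exp ε * ρ v' x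

/-- The density of the Piecewise Mechanism on the window `[l(v), r(v)]` around the input. -/
noncomputable def pmHighDensity (ε : ℝ) : ℝ :=
  (exp ε - exp (ε / 2)) / (2 * (exp (ε / 2) + 1))

/-- The density of the Piecewise Mechanism on the part of `[-C, C]` outside the window
`[l(v), r(v)]`. -/
noncomputable def pmLowDensity (ε : ℝ) : ℝ :=
  (exp (ε / 2) - 1) / (2 * (exp (ε / 2) + exp ε))

theorem IsLocallyPrivate.of_mem_Icc {ι Ω : Type*} {ε a : ℝ} {D : Set Ω} {ρ : ι → Ω → ℝ}
    (h : ∀ v, ∀ x ∈ D, ρ v x ∈ Set.Icc a (exp ε * a)) : IsLocallyPrivate ε D ρ := by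
  intro v v' x hx
  calc
    ρ v x ≤ exp ε * a := (h v x hx).2
    _ ≤ exp ε * ρ v' x := by gcongr; exact (h v' x hx).1

theorem pmHighDensity_eq_exp_mul_pmLowDensity (ε : ℝ) :
    pmHighDensity ε = exp ε * pmLowDensity ε := by
  have exp_eq_sq : exp ε = exp (ε / 2) ^ 2 := by rw [sq, ← exp_add, add_halves]
  rw [pmHighDensity, pmLowDensity, exp_eq_sq]
  field_simp
  ring

theorem pmLowDensity_nonneg {ε : ℝ} (hε : 0 ≤ ε) : 0 ≤ pmLowDensity ε := by
  have one_le_exp_half : 1 ≤ exp (ε / 2) := one_le_exp (by positivity)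
  exact div_nonneg (sub_nonneg.mpr one_le_exp_half) (by positivity)

theorem pmLowDensity_le_pmHighDensity {ε : ℝ} (hε : 0 ≤ ε) :
    pmLowDensity ε ≤ pmHighDensity ε := by
  rw [pmHighDensity_eq_exp_mul_pmLowDensity]
  exact le_mul_of_one_le_left (pmLowDensity_nonneg hε) (one_le_exp hε)

theorem pm_ldp_general {ι Ω : Type*} {ε : ℝ} (hε : 0 ≤ ε) (S : ι → Set Ω) (D : Set Ω)
    [∀ v, DecidablePred (· ∈ S v)] [DecidablePred (· ∈ D)] (ρ : ι → Ω → ℝ)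
    (hρ : ∀ v x, ρ v x =
      if x ∈ S v then pmHighDensity ε else if x ∈ D then pmLowDensity ε else 0) :
    pmHighDensity ε = exp ε * pmLowDensity ε ∧ IsLocallyPrivate ε D ρ := by
  have hratio := pmHighDensity_eq_exp_mul_pmLowDensity ε
  have hle := pmLowDensity_le_pmHighDensity hε
  refine ⟨hratio, .of_mem_Icc (a := pmLowDensity ε) fun v x hx => ?_⟩
  rw [hρ, if_pos hx, ← hratio]
  split_ifs
  · exact Set.right_mem_Icc.mpr hle
  · exact Set.left_mem_Icc.mpr hle

/-- The PM mechanism satisfies `ε`-local differential privacy, with its two density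
levels in exact ratio `e^ε`: `ρ₁ = e^ε · ρ₂`, and for all inputs `v, v' ∈ [−1,1]` and
every output `x ∈ [−C, C]`, `ρ_v(x) ≤ e^ε · ρ_{v'}(x)`. -/
theorem pm_ldp (ε : ℝ) (hε : 0 < ε)
    (C ρ₁ ρ₂ : ℝ) (l r : ℝ → ℝ)
    (hC : C = (exp (ε / 2) + 1) / (exp (ε / 2) - 1))
    (hl : ∀ v, l v = (C + 1) / 2 * v - (C - 1) / 2)
    (hr : ∀ v, r v = l v + C - 1)
    (hρ₁ : ρ₁ = (exp ε - exp (ε / 2)) / (2 * (exp (ε / 2) + 1)))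
    (hρ₂ : ρ₂ = (exp (ε / 2) - 1) / (2 * (exp (ε / 2) + exp ε)))
    (ρ : ℝ → ℝ → ℝ)
    (hρ : ∀ v x, ρ v x =
      if x ∈ Set.Icc (l v) (r v) then ρ₁
      else if x ∈ Set.Icc (-C) C then ρ₂ else 0) :
    ρ₁ = exp ε * ρ₂ ∧
      ∀ v ∈ Set.Icc (-1 : ℝ) 1, ∀ v' ∈ Set.Icc (-1 : ℝ) 1, ∀ x ∈ Set.Icc (-C) C,
        ρ v x ≤ exp ε * ρ v' x := by
  subst hρ₁ hρ₂
  obtain ⟨hratio, hprivate⟩ := pm_ldp_general hε.le (fun v => Set.Icc (l v) (r v)) _ ρ hρ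
  exact ⟨hratio, fun v _ v' _ => hprivate v v'⟩
end
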